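/- Let s ≥ 2 and n = T_s + 2. Then a partition λ of n satisfies deg(λ) = Δ_n if and only if λ = (s+1, s−1, s−2, ..., 2, 1, 1). In particular, n has a unique degree-maximizing partition. -/

import Mathlib

/-!
Write `D` for the set of part sizes of `λ`, `r = |D|`, and `E` for the multiset of repeated copies, so
that `λ = D + E` as multisets and the multiplicity bonus `B` is the number of distinct elements of `E`.

The predecessors `L - 1` of the gap elements `L` of a finite set `D` of positive integers are positive
and lie outside `D`, hence `|D| + A ≤ max D` (`card_add_gaps_le`). Removing the maximum and inducting
gives `∑ D ≥ T |D| + T A` (`T_add_T_gaps_le_sum`); applied to the support of `E` it gives `∑ E ≥ T B`.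
Therefore `T r + T A + T B ≤ T s + 2`.

As `T (s + 1) > T s + 2`, this forces `r ≤ s`. If `r < s`, the trivial bounds `A, B ≤ r` give
`deg λ ≤ r (r + 1) ≤ s (s - 1)`. If `r = s`, then `T A + T B ≤ 2`, so `A + B ≤ 2`, with equality only
for `A = B = 1`. In that case all the inequalities are equalities: `∑ D = T s + 1` with one gap forces
`D = {1, …, s - 1, s + 1}`, and `∑ E = 1` forces `E = {1}`. So `s (s - 1) + 2` is the maximal degree and
is attained only at `(s + 1, s - 1, …, 2, 1, 1)`.
-/

namespace PartitionDegree

/-- The `m`-th triangular number. -/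
def T (m : ℕ) : ℕ := m * (m + 1) / 2

/-- The number of distinct part sizes of a partition. -/
def supp {n : ℕ} (lam : n.Partition) : ℕ := lam.parts.toFinset.card

/-- The gap-bonus count: distinct part sizes `L ≥ 2` such that `L - 1` is not a part size. -/
def gapBonus {n : ℕ} (lam : n.Partition) : ℕ :=
  (lam.parts.toFinset.filter (fun L => 2 ≤ L ∧ (L - 1) ∉ lam.parts)).card

/-- The multiplicity-bonus count: distinct part sizes occurring with multiplicity at least 2. -/
def multBonus {n : ℕ} (lam : n.Partition) : ℕ :=
  (lam.parts.toFinset.filter (fun L => 2 ≤ lam.parts.count L)).card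

/-- The degree of a partition in the partition graph. -/
def deg {n : ℕ} (lam : n.Partition) : ℕ :=
  supp lam * (supp lam - 1) + gapBonus lam + multBonus lam

/-- The maximal degree over all partitions of `n`. -/
def maxDeg (n : ℕ) : ℕ := Finset.univ.sup (fun lam : n.Partition => deg lam)

/-- `ρ(q)`: the maximum of `a + b` over pairs with `T a + T b ≤ q`. -/
noncomputable def rho (q : ℕ) : ℕ := sSup {c : ℕ | ∃ a b : ℕ, c = a + b ∧ T a + T b ≤ q}

/-- `mu` is the conjugate of `lam`: for each `k ≥ 1`, the multiplicity of `k` in `mu`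
equals (number of parts of `lam` that are `≥ k`) minus (number of parts `≥ k + 1`). -/
def IsConjugate {n : ℕ} (lam mu : n.Partition) : Prop :=
  ∀ k : ℕ, 1 ≤ k →
    mu.parts.count k =
      Multiset.countP (fun p => k ≤ p) lam.parts -
        Multiset.countP (fun p => k + 1 ≤ p) lam.parts

theorem T_succ (m : ℕ) : T (m + 1) = T m + (m + 1) := by
  unfold T
  rw [show (m + 1) * (m + 1 + 1) = m * (m + 1) + (m + 1) * 2 by ring,
    Nat.add_mul_div_right _ _ (by norm_num)]

theorem T_mono : Monotone T := monotone_nat_of_le_succ fun m => by rw [T_succ]; omega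

/-- The gap elements of a finite set `D`: the `L ∈ D` with `L ≥ 2` and `L - 1 ∉ D`. -/
def gaps (D : Finset ℕ) : Finset ℕ := D.filter (fun L => 2 ≤ L ∧ (L - 1) ∉ D)

/-- `D` and the set of predecessors of its gap elements are disjoint subsets of `{1, …, m}`. -/
theorem card_add_gaps_le (D : Finset ℕ) (hD : ∀ x ∈ D, 1 ≤ x) (m : ℕ) (hm : ∀ x ∈ D, x ≤ m) :
    D.card + (gaps D).card ≤ m := by
  have hinj : Set.InjOn (fun L : ℕ => L - 1) (gaps D) := by
    intro a ha b hb hab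
    simp only [gaps, Finset.coe_filter, Set.mem_ofPred_eq] at ha hb hab
    omega
  have hdisj : Disjoint D ((gaps D).image (fun L => L - 1)) := by
    rw [Finset.disjoint_right]
    intro x hx
    obtain ⟨L, hL, rfl⟩ := Finset.mem_image.1 hx
    exact (Finset.mem_filter.1 hL).2.2
  rw [← Finset.card_image_of_injOn hinj, ← Finset.card_union_of_disjoint hdisj]
  have hsub : D ∪ (gaps D).image (fun L => L - 1) ⊆ Finset.Icc 1 m := by
    intro x hx
    rw [Finset.mem_Icc]
    rcases Finset.mem_union.1 hx with h | h
    · exact ⟨hD x h, hm x h⟩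
    · obtain ⟨L, hL, rfl⟩ := Finset.mem_image.1 h
      obtain ⟨h1, h2, -⟩ := Finset.mem_filter.1 hL
      have := hm L h1
      omega
  simpa using Finset.card_le_card hsub

/-- Adjoining `m` creates at most one new gap element, namely `m` itself. -/
theorem card_gaps_insert_le (m : ℕ) (D : Finset ℕ) :
    (gaps (insert m D)).card ≤ (gaps D).card + 1 := by
  refine (Finset.card_le_card (t := insert m (gaps D)) ?_).trans (Finset.card_insert_le _ _)
  intro x hx
  simp only [gaps, Finset.mem_filter, Finset.mem_insert, not_or] at hx ⊢
  tauto

theorem T_add_T_gaps_le_sum (D : Finset ℕ) (hD : ∀ x ∈ D, 1 ≤ x) :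
    T D.card + T (gaps D).card ≤ ∑ x ∈ D, x := by
  induction D using Finset.induction_on_max with
  | empty => simp [gaps, T]
  | insert m D hm ih =>
    have hmD : m ∉ D := fun h => lt_irrefl _ (hm m h)
    have ih := ih fun x hx => hD x (Finset.mem_insert_of_mem hx)
    have hle := card_add_gaps_le (insert m D) hD m (by
      intro x hx
      rcases Finset.mem_insert.1 hx with rfl | h
      · exact le_rfl
      · exact (hm x h).le)
    have hg := card_gaps_insert_le m D
    rw [Finset.sum_insert hmD]
    rw [Finset.card_insert_of_notMem hmD] at hle ⊢
    rw [T_succ]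
    have hT : T (gaps (insert m D)).card ≤ T (gaps D).card + (gaps (insert m D)).card := by
      cases h : (gaps (insert m D)).card with
      | zero => simp [T]
      | succ k =>
        rw [T_succ]
        have := T_mono (show k ≤ (gaps D).card by omega)
        omega
    omega

theorem T_card_le_sum (D : Finset ℕ) (hD : ∀ x ∈ D, 1 ≤ x) : T D.card ≤ ∑ x ∈ D, x :=
  (Nat.le_add_right _ _).trans (T_add_T_gaps_le_sum D hD)

theorem eq_Icc_of_sum_le (D : Finset ℕ) (hD : ∀ x ∈ D, 1 ≤ x) (h : ∑ x ∈ D, x ≤ T D.card) :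
    D = Finset.Icc 1 D.card := by
  refine Finset.eq_of_subset_of_card_le (fun x hx => Finset.mem_Icc.2 ⟨hD x hx, ?_⟩) (by simp)
  -- Deleting an element exceeding `|D|` would leave a set whose sum is below `T (|D| - 1)`.
  have h1 := T_card_le_sum (D.erase x) fun y hy => hD y (Finset.mem_of_mem_erase hy)
  have h2 := Finset.add_sum_erase D (fun y => y) hx
  have h3 := Finset.card_erase_add_one hx
  rw [← h3, T_succ] at h
  omega

/-- The equality case of `T_add_T_gaps_le_sum` with exactly one gap element. -/
theorem eq_insert_of_gaps (D : Finset ℕ) (hD : ∀ x ∈ D, 1 ≤ x) (s : ℕ) (hs : 1 ≤ s)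
    (hc : D.card = s) (hg : (gaps D).card = 1) (h : ∑ x ∈ D, x ≤ T s + 1) :
    D = insert (s + 1) (Finset.Icc 1 (s - 1)) := by
  have hne : D.Nonempty := Finset.card_pos.1 (by omega)
  have hmem := D.max'_mem hne
  have hle := card_add_gaps_le D hD (D.max' hne) fun x hx => D.le_max' x hx
  have hD' : ∀ y ∈ D.erase (D.max' hne), 1 ≤ y := fun y hy => hD y (Finset.mem_of_mem_erase hy)
  have h1 := T_card_le_sum _ hD'
  have h2 := Finset.add_sum_erase D (fun y => y) hmem
  have h3 : (D.erase (D.max' hne)).card = s - 1 := by rw [Finset.card_erase_of_mem hmem, hc]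
  have h4 : T s = T (s - 1) + s := by
    obtain ⟨k, rfl⟩ : ∃ k, s = k + 1 := ⟨s - 1, by omega⟩
    simpa using T_succ k
  rw [h3] at h1
  have h5 := eq_Icc_of_sum_le _ hD' (by rw [h3]; omega)
  have h6 : D.max' hne = s + 1 := by omega
  rw [h3] at h5
  rw [← Finset.insert_erase hmem, h5, h6]

theorem eq_singleton_of_sum_one (E : Multiset ℕ) (hE : ∀ x ∈ E, 1 ≤ x) (h : E.sum = 1) :
    E = {1} := by
  have hlen : ∀ F : Multiset ℕ, (∀ x ∈ F, 1 ≤ x) → F.card ≤ F.sum := fun F hF => by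
    simpa using Multiset.card_nsmul_le_sum hF
  have h0 : E ≠ 0 := by rintro rfl; simp at h
  obtain ⟨x, hx⟩ := Multiset.exists_mem_of_ne_zero h0
  obtain ⟨F, rfl⟩ := Multiset.exists_cons_of_mem hx
  have hx1 := hE x hx
  have hF := hlen F fun y hy => hE y (Multiset.mem_cons_of_mem hy)
  rw [Multiset.sum_cons] at h
  have hF0 : F = 0 := Multiset.card_eq_zero.1 (by omega)
  subst hF0
  obtain rfl : x = 1 := by simpa using h
  rfl

theorem gapBonus_eq {n : ℕ} (lam : n.Partition) :
    gapBonus lam = (gaps lam.parts.toFinset).card := by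
  simp [gapBonus, gaps]

/-- A part size is repeated exactly when a copy of it survives the removal of one copy of every part
size. -/
theorem multBonus_eq {n : ℕ} (lam : n.Partition) :
    multBonus lam = (lam.parts - lam.parts.dedup).toFinset.card := by
  unfold multBonus
  congr 1
  ext x
  rw [Finset.mem_filter, Multiset.mem_toFinset, Multiset.mem_toFinset, Multiset.mem_sub,
    Multiset.count_dedup]
  split_ifs with h
  · simp only [h, true_and]
    omega
  · simp [h]

theorem sum_toFinset_le (E : Multiset ℕ) : ∑ x ∈ E.toFinset, x ≤ E.sum := by
  rw [Finset.sum_multiset_count E]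
  refine Finset.sum_le_sum fun x hx => ?_
  have := Multiset.count_pos.2 (Multiset.mem_toFinset.1 hx)
  simpa using Nat.le_mul_of_pos_left x this

/-- The upper bound for the degree, together with its equality case. -/
theorem deg_bound (s : ℕ) (hs : 2 ≤ s) (lam : (T s + 2).Partition) :
    deg lam ≤ s * (s - 1) + 2 ∧ (deg lam = s * (s - 1) + 2 →
      lam.parts = (s + 1) ::ₘ 1 ::ₘ (Finset.Icc 1 (s - 1)).val) := by
  set D := lam.parts.toFinset with hDdef
  set E := lam.parts - lam.parts.dedup with hEdef
  have hpos : ∀ x ∈ lam.parts, 1 ≤ x := fun x hx => lam.parts_pos hx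
  have hD : ∀ x ∈ D, 1 ≤ x := fun x hx => hpos x (Multiset.mem_toFinset.1 hx)
  have hE : ∀ x ∈ E, 1 ≤ x := fun x hx =>
    hpos x (Multiset.mem_of_le (Multiset.sub_le_self _ _) hx)
  have hsplit : lam.parts = D.val + E :=
    (add_tsub_cancel_of_le (Multiset.dedup_le lam.parts)).symm
  have hsum : ∑ x ∈ D, x + E.sum = T s + 2 := by
    have h := lam.parts_sum
    rw [hsplit, Multiset.sum_add] at h
    rw [← h, Finset.sum_val]
    rfl
  have hA := T_add_T_gaps_le_sum D hD
  have hB := (T_card_le_sum E.toFinset fun x hx => hE x (Multiset.mem_toFinset.1 hx)).trans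
    (sum_toFinset_le E)
  have hAr : (gaps D).card ≤ D.card := Finset.card_filter_le _ _
  have hBr : E.toFinset.card ≤ D.card := by
    rw [← multBonus_eq]
    exact Finset.card_filter_le _ _
  have hdeg : deg lam = D.card * (D.card - 1) + (gaps D).card + E.toFinset.card := by
    rw [deg, gapBonus_eq, multBonus_eq]
    rfl
  have hr : D.card ≤ s := by
    by_contra! hlt
    have := T_mono (show s + 1 ≤ D.card from hlt)
    rw [T_succ] at this
    omega
  rw [hdeg]
  rcases hr.lt_or_eq with hlt | heq
  · have hlt2 : D.card * (D.card - 1) + (gaps D).card + E.toFinset.card ≤ s * (s - 1) := by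
      calc _ ≤ D.card * (D.card - 1) + 2 * D.card := by omega
        _ = (D.card + 1) * D.card := by
          rcases D.card with _ | k
          · rfl
          · simp only [Nat.add_sub_cancel]; ring
        _ ≤ s * (s - 1) := Nat.mul_le_mul hlt (by omega)
    exact ⟨by omega, fun h => by omega⟩
  · rw [heq] at hA ⊢
    -- `T 2 = 3 > 2` leaves at most one gap element and one repeated part size.
    have hsmall : ∀ k, T k ≤ 2 → k ≤ 1 := fun k hk => by
      by_contra! h
      have h3 := T_mono (show 2 ≤ k from h)
      have h4 : T 2 = 3 := rfl
      omega
    have ha := hsmall (gaps D).card (by omega)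
    have hb := hsmall E.toFinset.card (by omega)
    refine ⟨by omega, fun h => ?_⟩
    have ha1 : (gaps D).card = 1 := by omega
    have hb1 : E.toFinset.card = 1 := by omega
    have hT1 : T 1 = 1 := rfl
    rw [ha1] at hA
    rw [hb1] at hB
    have hDeq := eq_insert_of_gaps D hD s (by omega) heq ha1 (by omega)
    have hEeq := eq_singleton_of_sum_one E hE (by omega)
    rw [hsplit, hDeq, hEeq, Finset.insert_val_of_notMem (by simp)]
    rw [add_comm, Multiset.singleton_add, Multiset.cons_swap]

/-- The partition `(s + 1, s - 1, …, 2, 1, 1)` of `T s + 2`. -/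
def extremal (s : ℕ) (hs : 2 ≤ s) : (T s + 2).Partition where
  parts := (s + 1) ::ₘ 1 ::ₘ (Finset.Icc 1 (s - 1)).val
  parts_pos := by
    intro i hi
    simp only [Multiset.mem_cons, Finset.mem_val, Finset.mem_Icc] at hi
    omega
  parts_sum := by
    have hI : ∀ k, (Finset.Icc 1 k).val.sum = T k := fun k => by
      induction k with
      | zero => rfl
      | succ k ih =>
        rw [Finset.sum_val] at ih ⊢
        rw [Finset.sum_Icc_succ_top (by omega), ih, T_succ]
        rfl
    obtain ⟨k, rfl⟩ : ∃ k, s = k + 1 := ⟨s - 1, by omega⟩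
    rw [Multiset.sum_cons, Multiset.sum_cons, hI, T_succ]
    simp only [Nat.add_sub_cancel]
    omega

theorem le_deg_of_parts (s : ℕ) (hs : 2 ≤ s) (lam : (T s + 2).Partition)
    (h : lam.parts = (s + 1) ::ₘ 1 ::ₘ (Finset.Icc 1 (s - 1)).val) :
    s * (s - 1) + 2 ≤ deg lam := by
  have hmem : ∀ x, x ∈ lam.parts ↔ x = s + 1 ∨ (1 ≤ x ∧ x ≤ s - 1) := fun x => by
    rw [h]
    simp only [Multiset.mem_cons, Finset.mem_val, Finset.mem_Icc]
    omega
  have hsupp : supp lam = s := by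
    have : lam.parts.toFinset = insert (s + 1) (Finset.Icc 1 (s - 1)) := by
      ext x
      rw [Multiset.mem_toFinset, hmem, Finset.mem_insert, Finset.mem_Icc]
    rw [supp, this, Finset.card_insert_of_notMem (by simp), Nat.card_Icc]
    omega
  have hA : 1 ≤ gapBonus lam := by
    refine Finset.card_pos.2 ⟨s + 1, Finset.mem_filter.2 ⟨?_, ?_, ?_⟩⟩
    · rw [Multiset.mem_toFinset, hmem]; omega
    · omega
    · rw [hmem]; omega
  have hB : 1 ≤ multBonus lam := by
    refine Finset.card_pos.2 ⟨1, Finset.mem_filter.2 ⟨?_, ?_⟩⟩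
    · rw [Multiset.mem_toFinset, hmem]; omega
    · have h1 : 1 ∈ (Finset.Icc 1 (s - 1)).val := by
        rw [Finset.mem_val, Finset.mem_Icc]; omega
      have := Multiset.count_pos.2 h1
      rw [h, Multiset.count_cons_of_ne (by omega), Multiset.count_cons_self]
      omega
  rw [deg, hsupp]
  omega

theorem maxDeg_eq (s : ℕ) (hs : 2 ≤ s) : maxDeg (T s + 2) = s * (s - 1) + 2 := by
  refine le_antisymm (Finset.sup_le fun lam _ => (deg_bound s hs lam).1) ?_
  exact (le_deg_of_parts s hs (extremal s hs) rfl).trans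
    (Finset.le_sup (f := fun lam : (T s + 2).Partition => deg lam) (Finset.mem_univ _))

/-- for `n = T s + 2` with `s ≥ 2`, the unique degree maximizer is
`(s+1, s-1, …, 2, 1, 1)`. -/
theorem second_window (s : ℕ) (hs : 2 ≤ s) :
    (∀ lam : (T s + 2).Partition,
        deg lam = maxDeg (T s + 2) ↔
          lam.parts = (s + 1) ::ₘ 1 ::ₘ (Finset.Icc 1 (s - 1)).val) ∧
      (Finset.univ.filter
          (fun lam : (T s + 2).Partition => deg lam = maxDeg (T s + 2))).card = 1 := by
  have key : ∀ lam : (T s + 2).Partition, deg lam = maxDeg (T s + 2) ↔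
      lam.parts = (s + 1) ::ₘ 1 ::ₘ (Finset.Icc 1 (s - 1)).val := fun lam => by
    rw [maxDeg_eq s hs]
    exact ⟨(deg_bound s hs lam).2, fun h =>
      le_antisymm (deg_bound s hs lam).1 (le_deg_of_parts s hs lam h)⟩
  refine ⟨key, Finset.card_eq_one.2 ⟨extremal s hs, ?_⟩⟩
  ext lam
  rw [Finset.mem_filter, Finset.mem_singleton, key, Nat.Partition.ext_iff]
  simp [extremal]

end PartitionDegree
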